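/- arXiv:2405.08390 — 2 statements merged into one kernel-verified Lean document; each statement's English description precedes it below -/
import Mathlib

section
/- Let d ≥ 2 and r > 0. The convex hull of K_r in ℝ^d × S₀^{d×d} equals {(v, U) ∈ ℝ^d × S₀^{d×d} : v⊗v − U ≤ (r/d)·I_d}, where, for symmetric matrices A and B, A ≤ B means that B − A is positive semidefinite. -/
open MeasureTheory

noncomputable section

/-- Vectors in ℝ^d. -/
abbrev Vec (d : ℕ) := Fin d → ℝ

/-- Matrices (as functions). -/
abbrev Mat (d : ℕ) := Fin d → Fin d → ℝ

/-- The space S₀^{d×d} of symmetric trace-free d×d matrices, as a submodule. -/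
def S0 (d : ℕ) : Submodule ℝ (Mat d) where
  carrier := {U | (∀ i j, U i j = U j i) ∧ ∑ i, U i i = 0}
  add_mem' := by
    rintro U V ⟨hU1, hU2⟩ ⟨hV1, hV2⟩
    refine ⟨fun i j => by simp [hU1 i j, hV1 i j], ?_⟩
    simp [Finset.sum_add_distrib, hU2, hV2]
  zero_mem' := ⟨fun i j => rfl, by simp⟩
  smul_mem' := by
    rintro c U ⟨hU1, hU2⟩
    refine ⟨fun i j => by simp [hU1 i j], ?_⟩
    simp [← Finset.mul_sum, hU2]

/-- Partial derivative ∂ᵢ of a scalar function. -/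
def pd {d : ℕ} (i : Fin d) (f : Vec d → ℝ) (x : Vec d) : ℝ :=
  fderiv ℝ f x (Pi.single i 1)

/-- The wave cone Λ: states `(v̄, Ū)` with `v̄ ≠ 0` for which there are `q̄ ∈ ℝ` and
`ξ ≠ 0` with `Ū ξ + q̄ ξ = 0` and `v̄ · ξ = 0`. -/
def Lam (d : ℕ) : Set (Vec d × S0 d) :=
  {w | w.1 ≠ 0 ∧ ∃ (q : ℝ) (ξ : Vec d), ξ ≠ 0 ∧
    (∀ i, (∑ j, (w.2 : Mat d) i j * ξ j) + q * ξ i = 0) ∧ (∑ i, w.1 i * ξ i = 0)}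

/-- The constraint set `K_r = {(v, U) : U = v ⊗ v − (r/d)·I_d}` inside ℝ^d × S₀^{d×d}.
(Note that trace-freeness of `U` forces `|v|² = r` on `K_r`.) -/
def Kset (d : ℕ) (r : ℝ) : Set (Vec d × S0 d) :=
  {w | ∀ i j, (w.2 : Mat d) i j = w.1 i * w.1 j - (r / d) * (if i = j then 1 else 0)}

/-!
In the variables `(v, M)` with `M = U + (r/d) I`, the set `K_r` becomes the lift
`{(v, v ⊗ v) : |v|² = r}` of a sphere, and the claim describes the possible first and second
moments of a probability measure on that sphere: the covariance `M - v ⊗ v` has to be positive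
semidefinite, and `tr M = r`.

Conversely, let `M - v ⊗ v = ∑ λₖ uₖ ⊗ uₖ` with `uₖ` orthonormal, and let
`s = ∑ λₖ = r - |v|²`. If `s > 0`, then the chord of the sphere through `v` in direction `uₖ` has
its endpoints `v + t uₖ` at the two roots of `t² + 2 (v ⬝ uₖ) t = s`. The probability measure on
the endpoints with mean `v` has covariance `s uₖ ⊗ uₖ`, since `t` has mean `0` and the equation
then gives `t²` the mean `s`. Averaging these measures with weights `λₖ / s` gives `(v, M)`. If
`s = 0`, then `M = v ⊗ v`.
-/

open Matrix

section Moments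

variable {n : Type*}

/-- The point `(v, v ⊗ v)`: first and second moment of the Dirac mass at `v`, so that
convex combinations of such points are the moments of finitely supported probability measures. -/
def momentLift (v : n → ℝ) : (n → ℝ) × Matrix n n ℝ :=
  (v, vecMulVec v v)

lemma smul_vecMulVec_self_add_sub_eq {R : Type*} [CommRing R] {a b : R} (hab : a + b = 1)
    (v w : n → R) :
    a • vecMulVec v v + b • vecMulVec w w - vecMulVec (a • v + b • w) (a • v + b • w) =
      (a * b) • vecMulVec (v - w) (v - w) := by
  obtain rfl : b = 1 - a := eq_sub_of_add_eq' hab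
  ext i j
  simp only [Matrix.sub_apply, Matrix.add_apply, Matrix.smul_apply, vecMulVec_apply,
    Pi.add_apply, Pi.sub_apply, Pi.smul_apply, smul_eq_mul]
  ring

lemma convex_setOf_posSemidef_sub_vecMulVec [Finite n] :
    Convex ℝ {p : (n → ℝ) × Matrix n n ℝ | (p.2 - vecMulVec p.1 p.1).PosSemidef} := by
  rintro ⟨v, M⟩ hM ⟨w, N⟩ hN a b ha hb hab
  have variance_add : a • M + b • N - vecMulVec (a • v + b • w) (a • v + b • w) =
      a • (M - vecMulVec v v) + b • (N - vecMulVec w w) +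
        (a * b) • vecMulVec (v - w) (v - w) := by
    rw [← smul_vecMulVec_self_add_sub_eq hab]
    module
  have hvw : (vecMulVec (v - w) (v - w)).PosSemidef := posSemidef_vecMulVec_self_star (v - w)
  change (a • M + b • N - vecMulVec (a • v + b • w) (a • v + b • w)).PosSemidef
  rw [variance_add]
  exact ((hM.smul ha).add (hN.smul hb)).add (hvw.smul (mul_nonneg ha hb))

variable [Fintype n]

lemma convex_setOf_trace_eq (r : ℝ) :
    Convex ℝ {p : (n → ℝ) × Matrix n n ℝ | p.2.trace = r} :=
  convex_hyperplane ((traceLinearMap n ℝ ℝ) ∘ₗ LinearMap.snd ℝ _ _).isLinear r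

lemma convexHull_momentLift_sphere_subset (r : ℝ) :
    convexHull ℝ (momentLift '' {v : n → ℝ | v ⬝ᵥ v = r}) ⊆
      {p | (p.2 - vecMulVec p.1 p.1).PosSemidef ∧ p.2.trace = r} := by
  refine convexHull_min ?_ (convex_setOf_posSemidef_sub_vecMulVec.inter (convex_setOf_trace_eq r))
  rintro _ ⟨v, hv, rfl⟩
  exact ⟨by simp [momentLift, PosSemidef.zero], (trace_vecMulVec v v).trans hv⟩

lemma exists_convexCombination_roots_eq_zero (c : ℝ) {s : ℝ} (hs : 0 < s) :
    ∃ a b t₁ t₂ : ℝ, 0 ≤ a ∧ 0 ≤ b ∧ a + b = 1 ∧ a * t₁ + b * t₂ = 0 ∧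
      t₁ ^ 2 + 2 * c * t₁ = s ∧ t₂ ^ 2 + 2 * c * t₂ = s := by
  set q := √(c ^ 2 + s)
  have hq : q ^ 2 = c ^ 2 + s := Real.sq_sqrt (by positivity)
  have abs_lt_q : |c| < q := Real.lt_sqrt_of_sq_lt (by rw [sq_abs]; linarith)
  obtain ⟨neg_q_lt, lt_q⟩ := abs_lt.mp abs_lt_q
  have hq0 : 0 < q := by linarith
  refine ⟨(q - c) / (2 * q), (q + c) / (2 * q), -c - q, -c + q, ?_, ?_, ?_, ?_, ?_, ?_⟩
  · exact div_nonneg (by linarith) (by linarith)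
  · exact div_nonneg (by linarith) (by linarith)
  · field_simp
    ring
  · field_simp
    ring
  · linear_combination hq
  · linear_combination hq

lemma add_smul_dotProduct_self {R : Type*} [CommRing R] (v u : n → R) (t : R) :
    (v + t • u) ⬝ᵥ (v + t • u) = v ⬝ᵥ v + 2 * (v ⬝ᵥ u) * t + t ^ 2 * (u ⬝ᵥ u) := by
  simp only [add_dotProduct, dotProduct_add, smul_dotProduct, dotProduct_smul, smul_eq_mul,
    dotProduct_comm u v]
  ring

lemma mk_add_smul_vecMulVec_mem_convexHull {r s : ℝ} (hs : 0 < s) {v u : n → ℝ}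
    (hv : v ⬝ᵥ v + s = r) (hu : u ⬝ᵥ u = 1) :
    (v, vecMulVec v v + s • vecMulVec u u) ∈
      convexHull ℝ (momentLift '' {v : n → ℝ | v ⬝ᵥ v = r}) := by
  obtain ⟨a, b, t₁, t₂, ha, hb, hab, mean, root₁, root₂⟩ :=
    exists_convexCombination_roots_eq_zero (v ⬝ᵥ u) hs
  have mem {t : ℝ} (ht : t ^ 2 + 2 * (v ⬝ᵥ u) * t = s) :
      momentLift (v + t • u) ∈ convexHull ℝ (momentLift '' {v : n → ℝ | v ⬝ᵥ v = r}) := by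
    refine subset_convexHull ℝ _ (Set.mem_image_of_mem _ ?_)
    rw [Set.mem_ofPred_eq, add_smul_dotProduct_self, hu]
    linear_combination ht + hv
  have mean_eq : a • (v + t₁ • u) + b • (v + t₂ • u) = v := by
    calc a • (v + t₁ • u) + b • (v + t₂ • u) = (a + b) • v + (a * t₁ + b * t₂) • u := by module
      _ = v := by rw [hab, mean, one_smul, zero_smul, add_zero]
  have variance : a * b * (t₁ - t₂) ^ 2 = s := by
    linear_combination a * root₁ + b * root₂ - (a * t₁ + b * t₂ + 2 * (v ⬝ᵥ u)) * mean
      + (s + a * t₁ ^ 2 + b * t₂ ^ 2) * hab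
  have second_moment : a • vecMulVec (v + t₁ • u) (v + t₁ • u) +
      b • vecMulVec (v + t₂ • u) (v + t₂ • u) = vecMulVec v v + s • vecMulVec u u := by
    have h := smul_vecMulVec_self_add_sub_eq hab (v + t₁ • u) (v + t₂ • u)
    rw [mean_eq, add_sub_add_left_eq_sub, ← sub_smul, smul_vecMulVec, vecMulVec_smul, smul_smul,
      smul_smul, mul_assoc, ← sq, variance] at h
    rw [← h, add_sub_cancel]
  rw [← second_moment]
  nth_rw 1 [← mean_eq]
  exact convex_convexHull ℝ _ (mem root₁) (mem root₂) ha hb hab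

lemma eq_sum_eigenvalues_smul_vecMulVec [DecidableEq n] {𝕜 : Type*} [RCLike 𝕜]
    {A : Matrix n n 𝕜} (hA : A.IsHermitian) :
    A = ∑ k, hA.eigenvalues k •
      vecMulVec (hA.eigenvectorBasis k) (star (hA.eigenvectorBasis k : n → 𝕜)) := by
  ext i j
  conv_lhs => rw [hA.spectral_theorem, Unitary.conjStarAlgAut_apply, mul_apply]
  simp only [mul_diagonal, star_apply, Matrix.sum_apply, Matrix.smul_apply, vecMulVec_apply,
    IsHermitian.eigenvectorUnitary_apply, Pi.star_apply, Function.comp_apply,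
    RCLike.real_smul_eq_coe_mul]
  refine Finset.sum_congr rfl fun k _ ↦ ?_
  ring

lemma eigenvectorBasis_dotProduct_self [DecidableEq n] {A : Matrix n n ℝ} (hA : A.IsHermitian)
    (k : n) :
    (hA.eigenvectorBasis k : n → ℝ) ⬝ᵥ hA.eigenvectorBasis k = 1 := by
  rw [← hA.eigenvectorBasis.inner_eq_one k, EuclideanSpace.inner_eq_star_dotProduct, star_trivial]

lemma mem_convexHull_momentLift_sphere {r : ℝ} {v : n → ℝ} {M : Matrix n n ℝ}
    (hM : (M - vecMulVec v v).PosSemidef) (hr : M.trace = r) :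
    (v, M) ∈ convexHull ℝ (momentLift '' {v : n → ℝ | v ⬝ᵥ v = r}) := by
  classical
  set s := (M - vecMulVec v v).trace with s_def
  have hv : v ⬝ᵥ v + s = r := by
    rw [s_def, trace_sub, trace_vecMulVec, hr, add_sub_cancel]
  rcases (show 0 ≤ s from hM.trace_nonneg).eq_or_lt with hs | hs
  · have hMv : M = vecMulVec v v := sub_eq_zero.mp (hM.trace_eq_zero_iff.mp hs.symm)
    exact subset_convexHull ℝ _ ⟨v, by simpa [← hs] using hv, by rw [hMv, momentLift]⟩
  · set ev := hM.1.eigenvalues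
    set u : n → n → ℝ := fun k ↦ hM.1.eigenvectorBasis k
    have sum_ev : ∑ k, ev k = s := hM.1.trace_eq_sum_eigenvalues.symm
    have sum_weights : ∑ k, ev k / s = 1 := by
      rw [← Finset.sum_div, sum_ev, div_self hs.ne']
    have average : ∑ k, (ev k / s) • (v, vecMulVec v v + s • vecMulVec (u k) (u k)) = (v, M) := by
      have spectral : ∑ k, ev k • vecMulVec (u k) (u k) = M - vecMulVec v v :=
        (eq_sum_eigenvalues_smul_vecMulVec hM.1).symm
      refine Prod.ext ?_ ?_
      · simp only [Prod.fst_sum, Prod.smul_fst, ← Finset.sum_smul, sum_weights, one_smul]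
      · simp only [Prod.snd_sum, Prod.smul_snd, smul_add, Finset.sum_add_distrib,
          ← Finset.sum_smul, sum_weights, one_smul, smul_smul]
        simp only [div_mul_cancel₀ _ hs.ne', spectral, add_sub_cancel]
    rw [← average]
    exact (convex_convexHull ℝ _).sum_mem
      (fun k _ ↦ div_nonneg (hM.eigenvalues_nonneg k) hs.le) sum_weights
      fun k _ ↦ mk_add_smul_vecMulVec_mem_convexHull hs hv (eigenvectorBasis_dotProduct_self _ k)

theorem convexHull_momentLift_sphere (r : ℝ) :
    convexHull ℝ (momentLift '' {v : n → ℝ | v ⬝ᵥ v = r}) =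
      {p | (p.2 - vecMulVec p.1 p.1).PosSemidef ∧ p.2.trace = r} :=
  (convexHull_momentLift_sphere_subset r).antisymm
    fun _ hp ↦ mem_convexHull_momentLift_sphere hp.1 hp.2

end Moments

section RestoreTrace

variable {d : ℕ} {r : ℝ}

/-- The change of variables `(v, U) ↦ (v, U + (r/d) I)`, which turns trace-free matrices into
matrices of trace `r` and `K_r` into the lift of the sphere `|v|² = r`. -/
def restoreTrace (d : ℕ) (r : ℝ) : Vec d × S0 d →ᵃ[ℝ] Vec d × Matrix (Fin d) (Fin d) ℝ where
  toFun w := (w.1, of (w.2 : Mat d) + (r / d) • 1)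
  linear := LinearMap.id.prodMap ((ofLinearEquiv ℝ).toLinearMap ∘ₗ (S0 d).subtype)
  map_vadd' _ _ := Prod.ext rfl (add_assoc _ _ _)

lemma restoreTrace_apply (w : Vec d × S0 d) :
    restoreTrace d r w = (w.1, of (w.2 : Mat d) + (r / d) • 1) :=
  rfl

lemma restoreTrace_injective : Function.Injective (restoreTrace d r) := by
  intro w z h
  obtain ⟨h₁, h₂⟩ := Prod.ext_iff.mp h
  exact Prod.ext h₁ (Subtype.ext (of.injective (add_right_cancel h₂)))

lemma trace_div_smul_one (hd : d ≠ 0) (r : ℝ) :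
    ((r / d) • (1 : Matrix (Fin d) (Fin d) ℝ)).trace = r := by
  have : (d : ℝ) ≠ 0 := Nat.cast_ne_zero.mpr hd
  simp [trace_smul, this]

lemma trace_restoreTrace (hd : d ≠ 0) (w : Vec d × S0 d) : (restoreTrace d r w).2.trace = r := by
  have trace_free : (of (w.2 : Mat d)).trace = 0 := w.2.2.2
  rw [restoreTrace_apply, trace_add, trace_free, trace_div_smul_one hd, zero_add]

lemma exists_restoreTrace_eq (hd : d ≠ 0) (v : Vec d) {M : Matrix (Fin d) (Fin d) ℝ}
    (hM : M.IsSymm) (hr : M.trace = r) : ∃ U : S0 d, restoreTrace d r (v, U) = (v, M) := by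
  have symm : (M - (r / d) • 1).IsSymm := hM.sub (isSymm_one.smul _)
  have trace_free : (M - (r / d) • 1).trace = 0 := by
    rw [trace_sub, hr, trace_div_smul_one hd, sub_self]
  exact ⟨⟨of.symm (M - (r / d) • 1), fun i j ↦ symm.apply j i, trace_free⟩,
    Prod.ext rfl (sub_add_cancel M _)⟩

lemma mem_Kset_iff {w : Vec d × S0 d} : w ∈ Kset d r ↔ restoreTrace d r w = momentLift w.1 := by
  have entry (i j : Fin d) : (restoreTrace d r w).2 i j =
      (w.2 : Mat d) i j + (r / d) * (if i = j then 1 else 0) := by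
    simp only [restoreTrace_apply, Matrix.add_apply, of_apply, Matrix.smul_apply, one_apply,
      smul_eq_mul]
  have eq_iff : restoreTrace d r w = momentLift w.1 ↔
      ∀ i j, (restoreTrace d r w).2 i j = w.1 i * w.1 j := by
    rw [Prod.ext_iff, ← Matrix.ext_iff]
    exact and_iff_right rfl
  simp only [eq_iff, entry, Kset, Set.mem_ofPred_eq, eq_sub_iff_add_eq]

lemma image_restoreTrace_Kset (hd : d ≠ 0) :
    restoreTrace d r '' Kset d r = momentLift '' {v | v ⬝ᵥ v = r} := by
  ext p
  constructor
  · rintro ⟨w, hw, rfl⟩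
    rw [mem_Kset_iff] at hw
    refine ⟨w.1, ?_, hw.symm⟩
    rw [Set.mem_ofPred_eq, ← trace_restoreTrace (r := r) hd w, hw, momentLift, trace_vecMulVec]
  · rintro ⟨v, hv, rfl⟩
    obtain ⟨U, hU⟩ := exists_restoreTrace_eq hd v (transpose_vecMulVec v v)
      ((trace_vecMulVec v v).trans hv)
    exact ⟨(v, U), mem_Kset_iff.mpr hU, hU⟩

lemma mem_convexHull_Kset_iff (hd : d ≠ 0) {w : Vec d × S0 d} :
    w ∈ convexHull ℝ (Kset d r) ↔
      ((r / d) • 1 - (vecMulVec w.1 w.1 - of (w.2 : Mat d))).PosSemidef := by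
  have shift : (restoreTrace d r w).2 - vecMulVec w.1 w.1 =
      (r / d) • 1 - (vecMulVec w.1 w.1 - of (w.2 : Mat d)) := by
    rw [restoreTrace_apply, add_comm, ← sub_sub_eq_add_sub]
  rw [← restoreTrace_injective.mem_set_image, AffineMap.image_convexHull,
    image_restoreTrace_Kset hd, convexHull_momentLift_sphere, Set.mem_ofPred_eq,
    and_iff_left (trace_restoreTrace hd w), ← shift]
  rfl

end RestoreTrace

lemma posSemidef_smul_one_sub_iff {n : Type*} [Fintype n] [DecidableEq n] {c : ℝ}
    {A : Matrix n n ℝ} (hA : A.IsSymm) :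
    (c • 1 - A).PosSemidef ↔ ∀ ξ : n → ℝ, ∑ i, ∑ j, A i j * ξ i * ξ j ≤ c * ∑ i, ξ i ^ 2 := by
  have hermitian : (c • 1 - A).IsHermitian := (isSymm_one.smul c).sub hA
  have form (ξ : n → ℝ) : star ξ ⬝ᵥ (c • 1 - A) *ᵥ ξ =
      c * ∑ i, ξ i ^ 2 - ∑ i, ∑ j, A i j * ξ i * ξ j := by
    rw [star_trivial, sub_mulVec, dotProduct_sub, smul_mulVec, one_mulVec, dotProduct_smul]
    simp only [dotProduct, mulVec, smul_eq_mul, Finset.mul_sum, ← sq]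
    simp only [mul_comm, mul_left_comm]
  simp only [posSemidef_iff_dotProduct_mulVec, hermitian, true_and, form, sub_nonneg]

/-- Let `d ≥ 2`, `r > 0`. The convex hull of `K_r` in ℝ^d × S₀^{d×d}
is `{(v, U) : v⊗v − U ≤ (r/d)·I_d}`, the matrix inequality meaning positive
semidefiniteness of the difference, i.e. `ξᵀ(v⊗v − U)ξ ≤ (r/d)|ξ|²` for all `ξ`. -/
theorem stmt10 (d : ℕ) (hd : 2 ≤ d) (r : ℝ) (hr : 0 < r) :
    convexHull ℝ (Kset d r) =
      {w : Vec d × S0 d | ∀ ξ : Vec d,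
        ∑ i, ∑ j, (w.1 i * w.1 j - (w.2 : Mat d) i j) * ξ i * ξ j
          ≤ (r / d) * ∑ i, (ξ i) ^ 2} := by
  ext w
  have symm : (vecMulVec w.1 w.1 - of (w.2 : Mat d)).IsSymm :=
    .sub (transpose_vecMulVec _ _) (IsSymm.ext fun i j ↦ w.2.2.1 j i)
  rw [mem_convexHull_Kset_iff (by lia), posSemidef_smul_one_sub_iff symm]
  rfl
end
end

section
/- Let d ≥ 2 and r > 0. There exists a continuous strictly increasing function Ψ : [0,∞) → [0,∞) with Ψ(0) = 0 such that for every w̄ = (v̄, Ū) ∈ K_r^co one has dist(w̄, K_r) ≤ Ψ(r − |v̄|²). In particular, if w̄ = (v̄, Ū) ∈ K_r^co and |v̄|² = r, then w̄ ∈ K_r. -/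
open MeasureTheory

noncomputable section

/-! The defect `U + (r/d)·I - v ⊗ v` is positive semidefinite on the convex hull of `Kset d r`: it
vanishes on `Kset d r`, and a convex combination of two states `(v, U)`, `(u, W)` only adds a
nonnegative multiple of `(v - u) ⊗ (v - u)`. Its trace is `r - |v|²`, which therefore bounds all of
its entries. On the other hand, a linear functional attains, somewhere on the set, at least its
value at a given point of the hull; applied to `⟨v, ·⟩` this gives a state `(u, W)` in `Kset d r`
with `⟨v, u⟩ ≥ |v|²`, and hence `|v - u|² ≤ r - |v|²`. -/

open Matrix

section General

open scoped ComplexOrder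

theorem norm_apply_le_trace_of_posSemidef {𝕜 n : Type*} [RCLike 𝕜] [Fintype n] {M : Matrix n n 𝕜}
    (hM : M.PosSemidef) (i j : n) : ‖M i j‖ ≤ RCLike.re M.trace := by
  have diag_nonneg (k : n) : 0 ≤ RCLike.re (M k k) := (RCLike.nonneg_iff.1 hM.diag_nonneg).1
  have diag_le (k : n) : RCLike.re (M k k) ≤ RCLike.re M.trace := by
    rw [trace, map_sum]
    exact Finset.single_le_sum (fun l _ => diag_nonneg l) (Finset.mem_univ k)
  have minor_nonneg : 0 ≤ RCLike.re (M i i) * RCLike.re (M j j) - ‖M i j‖ ^ 2 := by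
    have det_minor :
        (M.submatrix ![i, j] ![i, j]).det = M i i * M j j - M i j * star (M i j) := by
      rw [det_fin_two, hM.isHermitian.apply j i]
      rfl
    have im_diag : RCLike.im (M i i) = 0 := (RCLike.nonneg_iff.1 hM.diag_nonneg).2
    have h := (RCLike.nonneg_iff.1 (hM.submatrix ![i, j]).det_nonneg).1
    simpa only [det_minor, map_sub, RCLike.mul_re, im_diag, zero_mul, sub_zero, RCLike.star_def,
      RCLike.mul_conj, ← RCLike.ofReal_pow, RCLike.ofReal_re] using h
  refine le_of_sq_le_sq ?_ ((diag_nonneg i).trans (diag_le i))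
  calc ‖M i j‖ ^ 2 ≤ RCLike.re (M i i) * RCLike.re (M j j) := sub_nonneg.1 minor_nonneg
    _ ≤ RCLike.re M.trace ^ 2 := by
      rw [sq]
      exact mul_le_mul (diag_le i) (diag_le j) (diag_nonneg j) ((diag_nonneg i).trans (diag_le i))

theorem exists_norm_map_sub_sq_le_of_mem_convexHull {V E : Type*} [AddCommGroup V] [Module ℝ V]
    [NormedAddCommGroup E] [InnerProductSpace ℝ E] (T : V →ₗ[ℝ] E) {s : Set V} {R : ℝ}
    (hs : ∀ x ∈ s, ‖T x‖ ^ 2 ≤ R) {w : V} (hw : w ∈ convexHull ℝ s) :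
    ∃ x ∈ s, ‖T w - T x‖ ^ 2 ≤ R - ‖T w‖ ^ 2 := by
  obtain ⟨x, hx, hwx⟩ : ∃ x ∈ s, inner ℝ (T w) (T w) ≤ inner ℝ (T w) (T x) :=
    ((innerₛₗ ℝ (T w) ∘ₗ T).convexOn convex_univ).exists_ge_of_mem_convexHull
      (Set.subset_univ s) hw
  rw [real_inner_self_eq_norm_sq] at hwx
  refine ⟨x, hx, ?_⟩
  rw [norm_sub_sq_real]
  linarith [hs x hx]

theorem norm_mul_sub_mul_le {A : Type*} [NonUnitalSeminormedRing A] {a b a' b' : A} {R δ : ℝ}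
    (ha : ‖a‖ ≤ R) (hb' : ‖b'‖ ≤ R) (haa' : ‖a - a'‖ ≤ δ) (hbb' : ‖b - b'‖ ≤ δ) :
    ‖a * b - a' * b'‖ ≤ 2 * R * δ := by
  have hR : 0 ≤ R := (norm_nonneg a).trans ha
  have hδ : 0 ≤ δ := (norm_nonneg _).trans haa'
  calc ‖a * b - a' * b'‖ = ‖a * (b - b') + (a - a') * b'‖ := by
        rw [mul_sub, sub_mul, sub_add_sub_cancel]
    _ ≤ ‖a‖ * ‖b - b'‖ + ‖a - a'‖ * ‖b'‖ :=
      norm_add_le_of_le (norm_mul_le _ _) (norm_mul_le _ _)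
    _ ≤ R * δ + δ * R := by gcongr
    _ = 2 * R * δ := by ring

theorem norm_apply_le_sqrt_of_sum_sq_le {ι : Type*} [Fintype ι] {v : ι → ℝ} {R : ℝ}
    (hv : ∑ i, v i ^ 2 ≤ R) (i : ι) : ‖v i‖ ≤ √R :=
  Real.abs_le_sqrt <|
    (Finset.single_le_sum (fun j _ => sq_nonneg (v j)) (Finset.mem_univ i)).trans hv

end General

section Defect

variable {d : ℕ} {r : ℝ}

/-- The defect `U + (r/d)·I - v ⊗ v` of a state `(v, U)`, which measures by how much the
constraint defining `Kset d r` fails. -/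
def defect (r : ℝ) (w : Vec d × S0 d) : Matrix (Fin d) (Fin d) ℝ :=
  .of (w.2 : Mat d) + (r / d) • 1 - vecMulVec w.1 w.1

theorem defect_apply (w : Vec d × S0 d) (i j : Fin d) :
    defect r w i j = (w.2 : Mat d) i j + r / d * (if i = j then 1 else 0) - w.1 i * w.1 j := by
  simp only [defect, Matrix.sub_apply, Matrix.add_apply, Matrix.of_apply, Matrix.smul_apply,
    Matrix.one_apply, smul_eq_mul, vecMulVec_apply]

theorem mem_Kset_iff_defect_eq_zero {w : Vec d × S0 d} : w ∈ Kset d r ↔ defect r w = 0 := by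
  simp only [Kset, Set.mem_ofPred_eq, ← Matrix.ext_iff, defect_apply, Matrix.zero_apply]
  grind

theorem snd_sub_snd_apply (w : Vec d × S0 d) {x : Vec d × S0 d} (hx : x ∈ Kset d r)
    (i j : Fin d) : (w.2 : Mat d) i j - (x.2 : Mat d) i j =
      (w.1 i * w.1 j - x.1 i * x.1 j) + defect r w i j := by
  rw [hx i j, defect_apply]
  ring

theorem trace_defect [NeZero d] (w : Vec d × S0 d) :
    (defect r w).trace = r - ∑ i, w.1 i ^ 2 := by
  have trace_snd : (Matrix.of (w.2 : Mat d)).trace = 0 := w.2.2.2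
  have trace_one : (r / d) * d = r := div_mul_cancel₀ r (NeZero.ne _)
  simp only [defect, trace_sub, trace_add, trace_snd, trace_smul, Matrix.trace_one,
    Fintype.card_fin, smul_eq_mul, trace_one, trace_vecMulVec, dotProduct, sq, zero_add]

theorem sum_sq_eq_of_mem_Kset [NeZero d] {w : Vec d × S0 d} (hw : w ∈ Kset d r) :
    ∑ i, w.1 i ^ 2 = r := by
  have h := trace_defect (r := r) w
  rw [mem_Kset_iff_defect_eq_zero.1 hw, trace_zero] at h
  exact (sub_eq_zero.1 h.symm).symm

theorem defect_convex_combination (x y : Vec d × S0 d) {a b : ℝ} (hab : a + b = 1) :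
    defect r (a • x + b • y) =
      a • defect r x + b • defect r y + (a * b) • vecMulVec (x.1 - y.1) (x.1 - y.1) := by
  obtain rfl : b = 1 - a := eq_sub_of_add_eq' hab
  ext i j
  simp only [defect_apply, Matrix.add_apply, Matrix.smul_apply, vecMulVec_apply, Prod.fst_add,
    Prod.snd_add, Prod.smul_fst, Prod.smul_snd, Submodule.coe_add, Submodule.coe_smul,
    Pi.add_apply, Pi.sub_apply, Pi.smul_apply, smul_eq_mul]
  ring

theorem convex_setOf_posSemidef_defect :
    Convex ℝ {w : Vec d × S0 d | (defect r w).PosSemidef} := by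
  intro x hx y hy a b ha hb hab
  rw [Set.mem_ofPred_eq, defect_convex_combination x y hab]
  exact ((PosSemidef.smul hx ha).add (PosSemidef.smul hy hb)).add
    ((posSemidef_vecMulVec_self_star (x.1 - y.1)).smul (mul_nonneg ha hb))

theorem posSemidef_defect_of_mem_convexHull {w : Vec d × S0 d}
    (hw : w ∈ convexHull ℝ (Kset d r)) : (defect r w).PosSemidef := by
  refine convexHull_min (fun x hx => ?_) convex_setOf_posSemidef_defect hw
  rw [Set.mem_ofPred_eq, mem_Kset_iff_defect_eq_zero.1 hx]
  exact .zero

theorem norm_defect_apply_le [NeZero d] {w : Vec d × S0 d} (hw : w ∈ convexHull ℝ (Kset d r))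
    (i j : Fin d) : ‖defect r w i j‖ ≤ r - ∑ i, w.1 i ^ 2 := by
  rw [← trace_defect]
  exact norm_apply_le_trace_of_posSemidef (posSemidef_defect_of_mem_convexHull hw) i j

theorem mem_Kset_of_mem_convexHull_of_sum_sq_eq [NeZero d] {w : Vec d × S0 d}
    (hw : w ∈ convexHull ℝ (Kset d r)) (hwr : ∑ i, w.1 i ^ 2 = r) : w ∈ Kset d r := by
  rw [mem_Kset_iff_defect_eq_zero, ← (posSemidef_defect_of_mem_convexHull hw).trace_eq_zero_iff,
    trace_defect, hwr, sub_self]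

theorem exists_mem_Kset_sum_sq_sub_le [NeZero d] {w : Vec d × S0 d}
    (hw : w ∈ convexHull ℝ (Kset d r)) :
    ∃ x ∈ Kset d r, ∑ i, (w.1 i - x.1 i) ^ 2 ≤ r - ∑ i, w.1 i ^ 2 := by
  let velocity : Vec d × S0 d →ₗ[ℝ] EuclideanSpace ℝ (Fin d) :=
    (WithLp.linearEquiv 2 ℝ (Vec d)).symm.toLinearMap ∘ₗ LinearMap.fst ℝ (Vec d) (S0 d)
  have norm_sq (x : Vec d × S0 d) : ‖velocity x‖ ^ 2 = ∑ i, x.1 i ^ 2 :=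
    EuclideanSpace.real_norm_sq_eq _
  simpa only [← map_sub, norm_sq, Prod.fst_sub, Pi.sub_apply] using
    exists_norm_map_sub_sq_le_of_mem_convexHull velocity
      (fun x hx => ((norm_sq x).trans (sum_sq_eq_of_mem_Kset hx)).le) hw

/-- The modulus `Ψ` that bounds the distance of a state of `convexHull ℝ (Kset d r)` to `Kset d r`
in terms of `t = r - |v|²`: if `(u, W)` is a state in `Kset d r` with `|v - u| ≤ √t`, then
`2 * √r * √t` bounds the entries of `v ⊗ v - u ⊗ u`, and `t` those of the defect of `(v, U)`. -/
def distModulus (r t : ℝ) : ℝ := √t + 2 * √r * √t + t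

theorem continuous_distModulus (r : ℝ) : Continuous (distModulus r) := by
  unfold distModulus
  fun_prop

theorem strictMono_distModulus (r : ℝ) : StrictMono (distModulus r) := by
  intro s t hst
  exact add_lt_add_of_le_of_lt (by gcongr) hst

theorem distModulus_nonneg (r : ℝ) {t : ℝ} (ht : 0 ≤ t) : 0 ≤ distModulus r t := by
  unfold distModulus
  positivity

theorem distModulus_zero (r : ℝ) : distModulus r 0 = 0 := by
  simp [distModulus]

theorem infDist_Kset_le_distModulus [NeZero d] {w : Vec d × S0 d}
    (hw : w ∈ convexHull ℝ (Kset d r)) :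
    Metric.infDist w (Kset d r) ≤ distModulus r (r - ∑ i, w.1 i ^ 2) := by
  obtain ⟨x, hx, hxw⟩ := exists_mem_Kset_sum_sq_sub_le hw
  refine (Metric.infDist_le_dist_of_mem hx).trans ?_
  set t := r - ∑ i, w.1 i ^ 2
  have ht₀ : 0 ≤ t := (Finset.sum_nonneg fun i _ => sq_nonneg _).trans hxw
  have norm_w_le (i : Fin d) : ‖w.1 i‖ ≤ √r :=
    norm_apply_le_sqrt_of_sum_sq_le (sub_nonneg.1 ht₀) i
  have norm_x_le (i : Fin d) : ‖x.1 i‖ ≤ √r :=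
    norm_apply_le_sqrt_of_sum_sq_le (sum_sq_eq_of_mem_Kset hx).le i
  have norm_sub_le (i : Fin d) : ‖w.1 i - x.1 i‖ ≤ √t := norm_apply_le_sqrt_of_sum_sq_le hxw i
  have norm_snd_sub_le (i j : Fin d) : ‖(w.2 : Mat d) i j - (x.2 : Mat d) i j‖ ≤
      2 * √r * √t + t := by
    rw [snd_sub_snd_apply w hx]
    exact norm_add_le_of_le
      (norm_mul_sub_mul_le (norm_w_le i) (norm_x_le j) (norm_sub_le i) (norm_sub_le j))
      (norm_defect_apply_le hw i j)
  have modulus_nonneg : 0 ≤ distModulus r t := distModulus_nonneg r ht₀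
  refine max_le ((dist_pi_le_iff modulus_nonneg).2 fun i => (norm_sub_le i).trans ?_)
    ((dist_pi_le_iff modulus_nonneg).2 fun i => (dist_pi_le_iff modulus_nonneg).2 fun j =>
      (norm_snd_sub_le i j).trans ?_)
  · rw [distModulus, add_assoc]
    exact le_add_of_nonneg_right (by positivity)
  · rw [distModulus, add_assoc]
    exact le_add_of_nonneg_left (Real.sqrt_nonneg t)

end Defect

/-- Let `d ≥ 2`, `r > 0`. There is a continuous strictly increasing
`Ψ : [0,∞) → [0,∞)` with `Ψ 0 = 0` such that `dist(w̄, K_r) ≤ Ψ(r − |v̄|²)` for every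
`w̄ = (v̄, Ū) ∈ K_r^co`. In particular, if `w̄ ∈ K_r^co` and `|v̄|² = r` then `w̄ ∈ K_r`. -/
theorem stmt11 (d : ℕ) (hd : 2 ≤ d) (r : ℝ) (hr : 0 < r) :
    ∃ Ψ : ℝ → ℝ,
      ContinuousOn Ψ (Set.Ici 0) ∧ StrictMonoOn Ψ (Set.Ici 0) ∧ Ψ 0 = 0 ∧
      (∀ t ∈ Set.Ici (0 : ℝ), 0 ≤ Ψ t) ∧
      (∀ w ∈ convexHull ℝ (Kset d r),
        Metric.infDist w (Kset d r) ≤ Ψ (r - ∑ i, (w.1 i) ^ 2)) ∧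
      (∀ w ∈ convexHull ℝ (Kset d r), (∑ i, (w.1 i) ^ 2 = r) → w ∈ Kset d r) := by
  have : NeZero d := ⟨by lia⟩
  exact ⟨distModulus r, (continuous_distModulus r).continuousOn,
    (strictMono_distModulus r).strictMonoOn _, distModulus_zero r,
    fun _ ht => distModulus_nonneg r ht, fun _ hw => infDist_Kset_le_distModulus hw,
    fun _ hw => mem_Kset_of_mem_convexHull_of_sum_sq_eq hw⟩
end
end
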